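/- arXiv:2303.06778 — 2 statements merged into one kernel-verified Lean document; each statement's English description precedes it below -/
import Mathlib

section
/- Let n ≥ 1, let Λ ⊂ ℝⁿ be a Lebesgue measurable set with finite Lebesgue measure, let V ∈ L¹(Λ, ℝ), and let (J_d)_{d∈ℕ} ⊂ L¹(Λ, ℝ) be a family of functions such that (i) for every d and every x ∈ Λ, J_d(x) ≤ V(x), and (ii) ∫_Λ |V(x) − J_d(x)| dx → 0 as d → ∞. Then for every γ ∈ ℝ, D_V({x ∈ Λ : V(x) ≤ γ}, {x ∈ Λ : J_d(x) ≤ γ}) → 0 as d → ∞. -/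
open Filter MeasureTheory

/-!
Let `J d ≤ V`. The two sublevel sets then differ exactly where `J d ≤ γ < V`. For any `r > γ`,
such a point satisfies either `γ < V < r` or `|J d - V| ≥ r - γ`. The first set does not depend on
`d` and shrinks to `∅` as `r ↓ γ`, so its measure is small by continuity from above; for a fixed
`r`, the measure of the second tends to zero because `L¹` convergence implies convergence in
measure.
-/

theorem setOf_le_and_lt_subset_preimage_Ioo_union {α : Type*}
    (f g : α → ℝ) (γ r : ℝ) :
    {x | f x ≤ γ ∧ γ < g x} ⊆ g ⁻¹' Set.Ioo γ r ∪ {x | r - γ ≤ ‖f x - g x‖} := by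
  rintro x ⟨hf, hg⟩
  rcases lt_or_ge (g x) r with hgr | hrg
  · exact Or.inl ⟨hg, hgr⟩
  · right
    calc r - γ ≤ g x - f x := sub_le_sub hrg hf
      _ ≤ ‖g x - f x‖ := le_abs_self _
      _ = ‖f x - g x‖ := norm_sub_rev _ _

section

variable {α ι : Type*} [MeasurableSpace α] {μ : Measure α} {l : Filter ι}

theorem tendsto_measure_preimage_Ioo_nhdsGT {β : Type*} [LinearOrder β]
    [TopologicalSpace β] [OrderTopology β] [FirstCountableTopology β] [MeasurableSpace β]
    [OpensMeasurableSpace β] {f : α → β} {a : β} (hf : AEMeasurable f μ)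
    (hfin : ∃ r > a, μ (f ⁻¹' Set.Ioo a r) ≠ ⊤) :
    Tendsto (fun r => μ (f ⁻¹' Set.Ioo a r)) (nhdsWithin a (Set.Ioi a)) (nhds 0) := by
  have hempty : ⋂ r > a, f ⁻¹' Set.Ioo a r = ∅ := by
    refine Set.eq_empty_of_forall_notMem fun x hx => ?_
    obtain ⟨r, hr, -⟩ := hfin
    rw [Set.mem_iInter₂] at hx
    exact (hx (f x) (hx r hr).1).2.false
  rw [← measure_empty (μ := μ), ← hempty]
  exact tendsto_measure_biInter_gt
    (fun r _ => hf.nullMeasurableSet_preimage measurableSet_Ioo)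
    (fun _ _ _ hij => Set.preimage_mono (Set.Ioo_subset_Ioo_right hij)) hfin

theorem tendstoInMeasure_of_tendsto_integral_norm_sub {E : Type*} [NormedAddCommGroup E]
    {f : ι → α → E} {g : α → E} (hf : ∀ i, Integrable (f i) μ) (hg : Integrable g μ)
    (hfg : Tendsto (fun i => ∫ x, ‖f i x - g x‖ ∂μ) l (nhds 0)) :
    TendstoInMeasure μ f l g := by
  refine tendstoInMeasure_of_tendsto_eLpNorm one_ne_zero
    (fun i => (hf i).aestronglyMeasurable) hg.aestronglyMeasurable ?_
  have eLpNorm_eq : ∀ i, eLpNorm (f i - g) 1 μ = ENNReal.ofReal (∫ x, ‖f i x - g x‖ ∂μ) :=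
    fun i => by
      rw [eLpNorm_one_eq_lintegral_enorm,
        ← ofReal_integral_norm_eq_lintegral_enorm ((hf i).sub hg)]
      rfl
  simpa only [eLpNorm_eq, ENNReal.ofReal_zero] using ENNReal.tendsto_ofReal hfg

variable {V : α → ℝ} {J : ι → α → ℝ} {γ : ℝ}

theorem tendsto_measure_setOf_le_and_lt (hV : AEMeasurable V μ)
    (hfin : ∃ r > γ, μ (V ⁻¹' Set.Ioo γ r) ≠ ⊤) (hJ : TendstoInMeasure μ J l V) :
    Tendsto (fun d => μ {x | J d x ≤ γ ∧ γ < V x}) l (nhds 0) := by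
  refine ENNReal.tendsto_nhds_zero.2 fun ε hε => ?_
  have hε2 : 0 < ε / 2 := ENNReal.half_pos hε.ne'
  obtain ⟨r, hr_small, hr⟩ : ∃ r, μ (V ⁻¹' Set.Ioo γ r) ≤ ε / 2 ∧ γ < r :=
    ((ENNReal.tendsto_nhds_zero.1 (tendsto_measure_preimage_Ioo_nhdsGT hV hfin) _ hε2).and
      self_mem_nhdsWithin).exists
  have hfar := tendstoInMeasure_iff_norm.1 hJ (r - γ) (sub_pos.2 hr)
  filter_upwards [ENNReal.tendsto_nhds_zero.1 hfar _ hε2] with d hd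
  calc μ {x | J d x ≤ γ ∧ γ < V x}
      ≤ μ (V ⁻¹' Set.Ioo γ r ∪ {x | r - γ ≤ ‖J d x - V x‖}) :=
        measure_mono (setOf_le_and_lt_subset_preimage_Ioo_union _ _ _ _)
    _ ≤ μ (V ⁻¹' Set.Ioo γ r) + μ {x | r - γ ≤ ‖J d x - V x‖} := measure_union_le _ _
    _ ≤ ε / 2 + ε / 2 := add_le_add hr_small hd
    _ = ε := ENNReal.add_halves ε

theorem statement_2_general {Λ : Set α} (hV : AEMeasurable V (μ.restrict Λ))
    (hfin : ∃ r > γ, μ.restrict Λ (V ⁻¹' Set.Ioo γ r) ≠ ⊤)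
    (hJV : ∀ d, ∀ᵐ x ∂μ, x ∈ Λ → J d x ≤ V x)
    (hJ : TendstoInMeasure (μ.restrict Λ) J l V) :
    Tendsto (fun d =>
        μ (({x ∈ Λ | V x ≤ γ} \ {x ∈ Λ | J d x ≤ γ}) ∪
          ({x ∈ Λ | J d x ≤ γ} \ {x ∈ Λ | V x ≤ γ})))
      l (nhds 0) := by
  refine tendsto_of_tendsto_of_tendsto_of_le_of_le tendsto_const_nhds
    (tendsto_measure_setOf_le_and_lt hV hfin hJ) (fun _ => zero_le) fun d => ?_
  calc μ (({x ∈ Λ | V x ≤ γ} \ {x ∈ Λ | J d x ≤ γ}) ∪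
        ({x ∈ Λ | J d x ≤ γ} \ {x ∈ Λ | V x ≤ γ}))
      ≤ μ {x ∈ Λ | J d x ≤ γ ∧ γ < V x} := by
        refine measure_mono_ae ?_
        filter_upwards [hJV d] with x hx
        rintro (⟨⟨hxΛ, hVx⟩, hJx⟩ | ⟨⟨hxΛ, hJx⟩, hVx⟩)
        · exact absurd ⟨hxΛ, (hx hxΛ).trans hVx⟩ hJx
        · exact ⟨hxΛ, hJx, not_le.1 fun h => hVx ⟨hxΛ, h⟩⟩
    _ = μ.restrict Λ {x ∈ Λ | J d x ≤ γ ∧ γ < V x} :=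
        (Measure.restrict_eq_self μ (Set.sep_subset _ _)).symm
    _ ≤ μ.restrict Λ {x | J d x ≤ γ ∧ γ < V x} := measure_mono fun _ hx => hx.2

end

/-- If `J d ≤ V` on a finite-measure measurable set `Λ`, all functions are
in `L¹(Λ)`, and `∫_Λ |V - J d| → 0`, then the non-strict `γ`-sublevel sets of `J d` on `Λ`
converge to the non-strict `γ`-sublevel set of `V` on `Λ` in the volume metric. -/
theorem statement_2 (n : ℕ) (hn : 1 ≤ n)
    (Λ : Set (EuclideanSpace ℝ (Fin n))) (hΛ : MeasurableSet Λ)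
    (hfin : volume Λ < ⊤)
    (V : EuclideanSpace ℝ (Fin n) → ℝ) (hV : IntegrableOn V Λ)
    (J : ℕ → EuclideanSpace ℝ (Fin n) → ℝ) (hJ : ∀ d : ℕ, IntegrableOn (J d) Λ)
    (h1 : ∀ d : ℕ, ∀ x ∈ Λ, J d x ≤ V x)
    (h2 : Tendsto (fun d : ℕ => ∫ x in Λ, |V x - J d x|) atTop (nhds 0))
    (γ : ℝ) :
    Tendsto (fun d : ℕ =>
        volume (({x ∈ Λ | V x ≤ γ} \ {x ∈ Λ | J d x ≤ γ}) ∪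
                ({x ∈ Λ | J d x ≤ γ} \ {x ∈ Λ | V x ≤ γ})))
      atTop (nhds 0) := by
  have : IsFiniteMeasure (volume.restrict Λ) := isFiniteMeasure_restrict.2 hfin.ne
  exact statement_2_general hV.aemeasurable ⟨γ + 1, lt_add_one γ, measure_ne_top _ _⟩
    (fun d => Eventually.of_forall (h1 d))
    (tendstoInMeasure_of_tendsto_integral_norm_sub hJ hV
      (by simpa only [Real.norm_eq_abs, abs_sub_comm] using h2))
end

section
/- Let n, m ≥ 1, let Λ ⊂ ℝⁿ be a compact set, let r > 0, let g₁, …, g_m : ℝⁿ → ℝ be polynomial functions, and set V(x) := max_{1 ≤ i ≤ m} g_i(x). Then for every ε > 0 there exist polynomial functions H₁, H₂ : ℝⁿ → ℝ such that: sup_{x∈Λ} |V(x) − H_j(x)| < ε for j ∈ {1,2}; H₁(x) > g_i(x) for every x with ‖x‖₂ < r and every 1 ≤ i ≤ m; and H₂(x) < g_i(x) for every 1 ≤ i ≤ m and every x with ‖x‖₂ < r satisfying x ∈ Ȳ_i, where Ȳ_i := {y ∈ Λ : g_i(y) ≥ g_j(y) for all 1 ≤ j ≤ m}. -/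
/-- A function `ℝⁿ → ℝ` is a polynomial function if it is the evaluation map of some
multivariate polynomial `P ∈ ℝ[x₁,…,xₙ]`. -/
def IsPolynomialFun {n : ℕ} (p : EuclideanSpace ℝ (Fin n) → ℝ) : Prop :=
  ∃ P : MvPolynomial (Fin n) ℝ, ∀ x, p x = MvPolynomial.eval (fun i => x i) P

/-!
By the Stone–Weierstrass theorem, a continuous function on a compact set can be approximated from
strictly above and from strictly below by polynomials. Approximating `V = maxᵢ gᵢ` in this way on
the union of `Λ` and the closed ball of radius `r` gives `H₁ > V ≥ gᵢ` on the ball and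
`H₂ < V = gᵢ` at the points of `Λ` where `gᵢ` attains the maximum.
-/

open Set

theorem continuousMap_aeval_apply {X σ R : Type*} [TopologicalSpace X] [CommSemiring R]
    [TopologicalSpace R] [IsTopologicalSemiring R] (u : σ → C(X, R)) (P : MvPolynomial σ R)
    (x : X) : MvPolynomial.aeval u P x = MvPolynomial.eval (fun i => u i x) P := by
  simpa [MvPolynomial.aeval_eq_eval] using
    MvPolynomial.comp_aeval_apply u (ContinuousMap.evalAlgHom R R x) P

theorem exists_mvPolynomial_aeval_near {X σ : Type*} [TopologicalSpace X] [CompactSpace X]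
    (u : σ → C(X, ℝ)) (hu : Function.Injective fun x i => u i x) (f : C(X, ℝ)) {δ : ℝ}
    (hδ : 0 < δ) : ∃ P : MvPolynomial σ ℝ, ‖MvPolynomial.aeval u P - f‖ < δ := by
  have separates : (MvPolynomial.aeval (R := ℝ) u).range.SeparatesPoints := by
    intro x y hxy
    obtain ⟨i, hi⟩ := Function.ne_iff.mp (hu.ne hxy)
    exact ⟨_, ⟨u i, ⟨MvPolynomial.X i, MvPolynomial.aeval_X u i⟩, rfl⟩, hi⟩
  obtain ⟨⟨_, P, rfl⟩, hP⟩ :=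
    ContinuousMap.exists_mem_subalgebra_near_continuousMap_of_separatesPoints _ separates f δ hδ
  exact ⟨P, hP⟩

section EuclideanSpace

variable {n : ℕ} {K : Set (EuclideanSpace ℝ (Fin n))}

theorem IsPolynomialFun.continuous {p : EuclideanSpace ℝ (Fin n) → ℝ} (hp : IsPolynomialFun p) :
    Continuous p := by
  obtain ⟨P, hP⟩ := hp
  rw [funext hP]
  exact (MvPolynomial.continuous_eval P).comp (by fun_prop)

theorem exists_isPolynomialFun_near {f : EuclideanSpace ℝ (Fin n) → ℝ} (hK : IsCompact K)
    (hf : ContinuousOn f K) {δ : ℝ} (hδ : 0 < δ) :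
    ∃ p, IsPolynomialFun p ∧ ∀ x ∈ K, |p x - f x| < δ := by
  have : CompactSpace K := isCompact_iff_compactSpace.mp hK
  let coord (i : Fin n) : C(K, ℝ) := ⟨fun x => x.1 i, by fun_prop⟩
  have coord_injective : Function.Injective fun x i => coord i x :=
    fun x y hxy => Subtype.ext (PiLp.ext (congrFun hxy))
  obtain ⟨P, hP⟩ := exists_mvPolynomial_aeval_near coord coord_injective
    ⟨K.domRestrict f, hf.domRestrict⟩ hδ
  refine ⟨fun x => MvPolynomial.eval (fun i => x i) P, ⟨P, fun _ => rfl⟩, fun x hx => ?_⟩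
  simpa [continuousMap_aeval_apply, coord] using
    (ContinuousMap.norm_lt_iff _ hδ).mp hP ⟨x, hx⟩

theorem exists_isPolynomialFun_mem_Ioo {f : EuclideanSpace ℝ (Fin n) → ℝ} (hK : IsCompact K)
    (hf : ContinuousOn f K) {a b : ℝ} (hab : a < b) :
    ∃ p, IsPolynomialFun p ∧ ∀ x ∈ K, p x ∈ Ioo (f x + a) (f x + b) := by
  obtain ⟨p, hp, hpf⟩ := exists_isPolynomialFun_near hK (hf.add_const ((a + b) / 2))
    (half_pos (sub_pos.mpr hab))
  refine ⟨p, hp, fun x hx => ?_⟩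
  obtain ⟨lower, upper⟩ := abs_lt.mp (hpf x hx)
  constructor <;> linarith

theorem statement_8_general {ι : Type*} [Fintype ι] [Nonempty ι]
    {Λ B : Set (EuclideanSpace ℝ (Fin n))} (hΛ : IsCompact Λ) (hB : IsCompact B)
    {g : ι → EuclideanSpace ℝ (Fin n) → ℝ} (hg : ∀ i, ContinuousOn (g i) (Λ ∪ B))
    {V : EuclideanSpace ℝ (Fin n) → ℝ}
    (hV : ∀ x, V x = Finset.univ.sup' Finset.univ_nonempty (fun i => g i x))
    {ε : ℝ} (hε : 0 < ε) :
    ∃ H₁ H₂ : EuclideanSpace ℝ (Fin n) → ℝ,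
      IsPolynomialFun H₁ ∧ IsPolynomialFun H₂ ∧
      (⨆ x ∈ Λ, |V x - H₁ x|) < ε ∧ (⨆ x ∈ Λ, |V x - H₂ x|) < ε ∧
      (∀ x ∈ B, ∀ i, g i x < H₁ x) ∧
      (∀ i, ∀ x ∈ Λ, (∀ j, g j x ≤ g i x) → H₂ x < g i x) := by
  have V_continuousOn : ContinuousOn V (Λ ∪ B) :=
    (ContinuousOn.finset_sup'_apply _ fun i _ => hg i).congr fun x _ => hV x
  have le_V (x i) : g i x ≤ V x := hV x ▸ Finset.le_sup' (g · x) (Finset.mem_univ i)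
  have V_le {x i} (hi : ∀ j, g j x ≤ g i x) : V x ≤ g i x :=
    hV x ▸ Finset.sup'_le _ _ fun j _ => hi j
  have iSup_lt {H : EuclideanSpace ℝ (Fin n) → ℝ} (hH : ∀ x ∈ Λ, |V x - H x| ≤ ε / 2) :
      (⨆ x ∈ Λ, |V x - H x|) < ε :=
    (Real.iSup_le (fun x => Real.iSup_le (hH x) (half_pos hε).le) (half_pos hε).le).trans_lt
      (half_lt_self hε)
  obtain ⟨H₁, H₁_poly, hH₁⟩ :=
    exists_isPolynomialFun_mem_Ioo (hΛ.union hB) V_continuousOn (half_pos hε)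
  obtain ⟨H₂, H₂_poly, hH₂⟩ :=
    exists_isPolynomialFun_mem_Ioo (hΛ.union hB) V_continuousOn (neg_lt_zero.mpr (half_pos hε))
  simp only [add_zero, mem_Ioo] at hH₁ hH₂
  refine ⟨H₁, H₂, H₁_poly, H₂_poly, iSup_lt fun x hx => ?_, iSup_lt fun x hx => ?_,
    fun x hx i => (le_V x i).trans_lt (hH₁ x (.inr hx)).1,
    fun i x hx hi => (hH₂ x (.inl hx)).2.trans_le (V_le hi)⟩
  · exact abs_le.mpr (by constructor <;> linarith [hH₁ x (.inl hx)])
  · exact abs_le.mpr (by constructor <;> linarith [hH₂ x (.inl hx)])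

end EuclideanSpace

/-- The pointwise maximum `V` of finitely many polynomial functions can be
approximated uniformly on a compact set `Λ` by polynomial functions `H₁, H₂`, with
`H₁ > g i` on the open ball `B_r(0)` for every `i`, and `H₂ < g i` on
`B_r(0) ∩ Ȳ_i`, where `Ȳ_i = {y ∈ Λ | ∀ j, g i y ≥ g j y}`. -/
theorem statement_8 (n m : ℕ) (hn : 1 ≤ n) (hm : 1 ≤ m)
    (Λ : Set (EuclideanSpace ℝ (Fin n))) (hΛ : IsCompact Λ)
    (r : ℝ) (hr : 0 < r)
    (g : Fin m → EuclideanSpace ℝ (Fin n) → ℝ)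
    (hg : ∀ i, IsPolynomialFun (g i))
    (V : EuclideanSpace ℝ (Fin n) → ℝ)
    (hV : ∀ x, V x = Finset.univ.sup'
      (Finset.univ_nonempty_iff.mpr ⟨⟨0, hm⟩⟩) (fun i => g i x))
    (ε : ℝ) (hε : 0 < ε) :
    ∃ H₁ H₂ : EuclideanSpace ℝ (Fin n) → ℝ,
      IsPolynomialFun H₁ ∧ IsPolynomialFun H₂ ∧
      (⨆ x ∈ Λ, |V x - H₁ x|) < ε ∧ (⨆ x ∈ Λ, |V x - H₂ x|) < ε ∧
      (∀ x, ‖x‖ < r → ∀ i : Fin m, g i x < H₁ x) ∧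
      (∀ i : Fin m, ∀ x, ‖x‖ < r →
        x ∈ {y ∈ Λ | ∀ j : Fin m, g j y ≤ g i y} → H₂ x < g i x) := by
  have : Nonempty (Fin m) := ⟨⟨0, hm⟩⟩
  obtain ⟨H₁, H₂, H₁_poly, H₂_poly, H₁_near, H₂_near, H₁_gt, H₂_lt⟩ := statement_8_general hΛ
    (isCompact_closedBall 0 r) (fun i => (hg i).continuous.continuousOn) hV hε
  exact ⟨H₁, H₂, H₁_poly, H₂_poly, H₁_near, H₂_near,
    fun x hx => H₁_gt x (mem_closedBall_zero_iff.mpr hx.le), fun i x _ hx => H₂_lt i x hx.1 hx.2⟩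
end
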